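/- Let π and π′ be two Dyck paths of semilength n with respective area sequences a(π), a(π′) and dinv sequences d(π), d(π′). If the underlying set { (d_i(π), a_i(π)) : 1 ≤ i ≤ n } equals the underlying set { (d_i(π′), a_i(π′)) : 1 ≤ i ≤ n }, then π = π′ (equivalently, a(π) = a(π′)). -/

import Mathlib

/-- The area sequence of a Dyck path of semilength `n`: a tuple
`a : Fin n → ℕ` with first entry zero and `a (i+1) ≤ a i + 1`. -/
def IsDyckArea {n : ℕ} (a : Fin n → ℕ) : Prop :=
  (∀ i : Fin n, (i : ℕ) = 0 → a i = 0) ∧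
  (∀ i j : Fin n, (j : ℕ) = (i : ℕ) + 1 → a j ≤ a i + 1)

/-- The dinv sequence of a Dyck path encoded by its area sequence:
`d i = #{ j > i | a j = a i or a j = a i - 1 }`. -/
def dinvSeq {n : ℕ} (a : Fin n → ℕ) (i : Fin n) : ℕ :=
  (Finset.univ.filter (fun j : Fin n => i < j ∧ (a j = a i ∨ a j + 1 = a i))).card


/-- Splitting the entries of level `a i` or `a i - 1` into those after `i` and those up to `i`. -/
theorem dinv_add_prefix {n : ℕ} (a : Fin n → ℕ) (i : Fin n) :
    dinvSeq a i + (Finset.univ.filter (fun j : Fin n => j ≤ i ∧ (a j = a i ∨ a j + 1 = a i))).card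
      = (Finset.univ.filter (fun j : Fin n => a j = a i ∨ a j + 1 = a i)).card := by
  unfold dinvSeq
  rw [← Finset.card_union_of_disjoint]
  · congr 1
    ext j
    simp only [Finset.mem_union, Finset.mem_filter, Finset.mem_univ, true_and]
    have := lt_or_ge i j
    tauto
  · rw [Finset.disjoint_filter]
    rintro j - ⟨h1, -⟩ ⟨h2, -⟩
    exact absurd h1 (not_lt.mpr h2)

theorem dinv_lt {n : ℕ} (a : Fin n → ℕ) {i j : Fin n} (hij : i < j) (h : a i = a j) :
    dinvSeq a j < dinvSeq a i := by
  unfold dinvSeq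
  apply Finset.card_lt_card
  rw [Finset.ssubset_iff_of_subset]
  · exact ⟨j, by simp [hij, h], by simp⟩
  · intro k
    simp only [Finset.mem_filter, Finset.mem_univ, true_and, h]
    rintro ⟨h1, h2⟩
    exact ⟨hij.trans h1, h2⟩

theorem pair_injective {n : ℕ} (a : Fin n → ℕ) :
    Function.Injective (fun i : Fin n => (dinvSeq a i, a i)) := by
  intro i j hij
  simp only [Prod.mk.injEq] at hij
  rcases lt_trichotomy i j with h | h | h
  · have := dinv_lt a h hij.2
    omega
  · exact h
  · have := dinv_lt a h hij.2.symm
    omega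

theorem level_card_eq {n : ℕ} (a a' : Fin n → ℕ)
    (h : Set.range (fun i : Fin n => (dinvSeq a i, a i)) =
         Set.range (fun i : Fin n => (dinvSeq a' i, a' i))) (y : ℕ) :
    (Finset.univ.filter (fun j : Fin n => a j = y ∨ a j + 1 = y)).card =
    (Finset.univ.filter (fun j : Fin n => a' j = y ∨ a' j + 1 = y)).card := by
  have key : ∀ b : Fin n → ℕ, (Finset.univ.filter (fun j : Fin n => b j = y ∨ b j + 1 = y)).card =
      ((Finset.univ.image (fun i : Fin n => (dinvSeq b i, b i))).filter
        (fun q => q.2 = y ∨ q.2 + 1 = y)).card := by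
    intro b
    rw [Finset.filter_image, Finset.card_image_of_injective _ (pair_injective b)]
  rw [key, key]
  have : Finset.univ.image (fun i : Fin n => (dinvSeq a i, a i)) =
      Finset.univ.image (fun i : Fin n => (dinvSeq a' i, a' i)) := by
    apply Finset.coe_injective
    simpa using h
  rw [this]

theorem key_not_lt {n : ℕ} (a a' : Fin n → ℕ) (ha : IsDyckArea a)
    (h : Set.range (fun i : Fin n => (dinvSeq a i, a i)) =
         Set.range (fun i : Fin n => (dinvSeq a' i, a' i)))
    (p : Fin n) (hp : ∀ j < p, a j = a' j) : ¬ a p < a' p := by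
  intro hlt
  have hM := level_card_eq a a' h
  have hmem : (dinvSeq a' p, a' p) ∈ Set.range (fun i : Fin n => (dinvSeq a i, a i)) := by
    rw [h]; exact ⟨p, rfl⟩
  obtain ⟨i, hi⟩ := hmem
  simp only [Prod.mk.injEq] at hi
  obtain ⟨hd, hai⟩ := hi
  have e1 := dinv_add_prefix a i
  have e2 := dinv_add_prefix a' p
  rw [hai] at e1
  have hMy := hM (a' p)
  rcases lt_trichotomy i p with hip | hip | hip
  · -- then the dinv values at `i` agree
    have h3 := dinv_add_prefix a' i
    rw [← hp i hip, hai] at h3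
    have h4 : (Finset.univ.filter (fun j : Fin n => j ≤ i ∧ (a j = a' p ∨ a j + 1 = a' p))) =
        (Finset.univ.filter (fun j : Fin n => j ≤ i ∧ (a' j = a' p ∨ a' j + 1 = a' p))) := by
      apply Finset.filter_congr
      intro j _
      apply and_congr_right
      intro hj
      rw [hp j (lt_of_le_of_lt hj hip)]
    rw [h4] at e1
    have h5 := dinv_lt a' hip ((hp i hip).symm.trans hai)
    omega
  · subst hip; omega
  · -- no entries of level `y`, `y-1` on `[p, i)`
    have hno : ∀ k, p ≤ k → k < i → ¬ (a k = a' p ∨ a k + 1 = a' p) := by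
      intro k hpk hki hk
      have h6 : (Finset.univ.filter (fun j : Fin n => j ≤ p ∧ (a' j = a' p ∨ a' j + 1 = a' p))) =
          insert p (Finset.univ.filter (fun j : Fin n => j < p ∧ (a j = a' p ∨ a j + 1 = a' p))) := by
        ext j
        simp only [Finset.mem_insert, Finset.mem_filter, Finset.mem_univ, true_and]
        rcases lt_trichotomy j p with hj | hj | hj
        · simp [hj.le, hj, hj.ne, hp j hj]
        · simp [hj]
        · simp [not_le.mpr hj, hj.ne', not_lt.mpr hj.le]
      have h7 : insert i (insert k (Finset.univ.filter
            (fun j : Fin n => j < p ∧ (a j = a' p ∨ a j + 1 = a' p)))) ⊆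
          (Finset.univ.filter (fun j : Fin n => j ≤ i ∧ (a j = a' p ∨ a j + 1 = a' p))) := by
        intro j
        simp only [Finset.mem_insert, Finset.mem_filter, Finset.mem_univ, true_and]
        rintro (rfl | rfl | ⟨h1, h2⟩)
        · exact ⟨le_rfl, Or.inl hai⟩
        · exact ⟨hki.le, hk⟩
        · exact ⟨(h1.trans hip).le, h2⟩
      have h8 := Finset.card_le_card h7
      rw [Finset.card_insert_of_notMem, Finset.card_insert_of_notMem] at h8
      · rw [h6, Finset.card_insert_of_notMem (by simp)] at e2
        omega
      · simp [not_lt.mpr hpk]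
      · simp [hki.ne', not_lt.mpr hip.le]
    have hstep : ∀ m : ℕ, ∀ k : Fin n, (k : ℕ) = p + m → k ≤ i → a k < a' p := by
      intro m
      induction m with
      | zero =>
        intro k hk _
        have : k = p := Fin.ext (by simpa using hk)
        rw [this]; exact hlt
      | succ m ih =>
        intro k hk hki
        have hki' : (k : ℕ) ≤ i := hki
        let k' : Fin n := ⟨p + m, by omega⟩
        have hk'i : k' < i := by
          rw [Fin.lt_def]; simp only [k']; omega
        have h1 := ih k' rfl hk'i.le
        have h2 := hno k' (by rw [Fin.le_def]; simp [k']) hk'i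
        have h3 := ha.2 k' k (by simp only [k']; omega)
        omega
    have hip' : (p : ℕ) < i := hip
    have := hstep (i - p) i (by omega) le_rfl
    omega

/-- Two Dyck paths with the same underlying set of (dinv, area) pairs coincide. -/
theorem dyck_eq_of_dinv_area_set_eq {n : ℕ} (a a' : Fin n → ℕ)
    (ha : IsDyckArea a) (ha' : IsDyckArea a')
    (h : Set.range (fun i : Fin n => (dinvSeq a i, a i)) =
         Set.range (fun i : Fin n => (dinvSeq a' i, a' i))) :
    a = a' := by
  have main : ∀ p : Fin n, a p = a' p := by
    intro p
    induction p using WellFoundedLT.induction with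
    | ind p ih =>
      have h1 := key_not_lt a a' ha h p ih
      have h2 := key_not_lt a' a ha' h.symm p (fun j hj => (ih j hj).symm)
      omega
  exact funext main
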